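/- arXiv:1602.03805 — 2 statements merged into one kernel-verified Lean document; each statement's English description precedes it below -/
import Mathlib

section
/- Let S be a nonempty finite set, let f, p : S → ℝ, and let H be any set of real-valued functions on S with p ∈ H. Suppose h ∈ H minimizes the empirical squared loss h ↦ Σ_{s ∈ S} (f(s) − h(s))² over H. Then Σ_{s ∈ S} (h(s) − p(s))² ≤ 4·Σ_{s ∈ S} (f(s) − p(s))². In particular, if |f(s) − p(s)| ≤ δ for all s ∈ S and |S| = k, then Σ_{s ∈ S} (h(s) − p(s))² ≤ 4·k·δ². -/
open Finset

/-- any least-squares minimizer `h` over a hypothesis class `H` containing a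
reference function `p` satisfies `∑ (h−p)² ≤ 4 ∑ (f−p)²`; in particular, if
`|f−p| ≤ δ` pointwise on `S` with `|S| = k`, then `∑ (h−p)² ≤ 4kδ²`. -/
theorem least_squares_fit_close_to_reference
    (S : Type*) [Fintype S] [Nonempty S]
    (f p : S → ℝ) (H : Set (S → ℝ)) (hp : p ∈ H)
    (h : S → ℝ) (hh : h ∈ H)
    (hmin : ∀ g ∈ H, ∑ s, (f s - h s) ^ 2 ≤ ∑ s, (f s - g s) ^ 2) :
    (∑ s, (h s - p s) ^ 2 ≤ 4 * ∑ s, (f s - p s) ^ 2) ∧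
      ∀ δ : ℝ, (∀ s, |f s - p s| ≤ δ) →
        ∑ s, (h s - p s) ^ 2 ≤ 4 * (Fintype.card S : ℝ) * δ ^ 2 := by
  have key : ∑ s, (h s - p s) ^ 2 ≤ 4 * ∑ s, (f s - p s) ^ 2 := by
    have h1 : ∑ s, (h s - p s) ^ 2 ≤ ∑ s, (2 * (f s - h s) ^ 2 + 2 * (f s - p s) ^ 2) := by
      apply Finset.sum_le_sum
      intro s _
      nlinarith [sq_nonneg ((f s - h s) + (f s - p s))]
    rw [Finset.sum_add_distrib, ← Finset.mul_sum, ← Finset.mul_sum] at h1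
    linarith [hmin p hp]
  refine ⟨key, fun δ hδ => key.trans ?_⟩
  have h2 : ∑ s, (f s - p s) ^ 2 ≤ ∑ _s : S, δ ^ 2 := by
    apply Finset.sum_le_sum
    intro s _
    exact sq_le_sq' (abs_le.mp (hδ s)).1 (abs_le.mp (hδ s)).2
  rw [Finset.sum_const, Finset.card_univ, nsmul_eq_mul] at h2
  linarith
end

section
/- Let m ≥ 2, let x₁, …, x_l be pairwise distinct points in ℝ^m, and let y₁, …, y_l ∈ ℝ be arbitrary labels. Then for every δ > 0 there exists an infinitely differentiable, compactly supported function f : ℝ^m → ℝ such that f(x_i) = y_i for all i = 1, …, l and ∫_{ℝ^m} ‖∇f(x)‖² dx < δ. Consequently, for any λ > 0, the infimum over smooth compactly supported f of the regularized risk Σ_{i=1}^l (y_i − f(x_i))² + λ·∫_{ℝ^m} ‖∇f‖² dx equals 0, and it is approached by functions that interpolate the labels exactly while being arbitrarily close to zero in first-order energy. -/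
open MeasureTheory


lemma norm_gradient_eq' {m : ℕ} (f : EuclideanSpace ℝ (Fin m) → ℝ) (z : EuclideanSpace ℝ (Fin m)) :
    ‖gradient f z‖ = ‖fderiv ℝ f z‖ := by
  unfold gradient
  exact LinearIsometryEquiv.norm_map _ _

lemma integrable_energy {m : ℕ} (f : EuclideanSpace ℝ (Fin m) → ℝ)
    (hf : ContDiff ℝ (⊤ : ℕ∞) f) (hc : HasCompactSupport f) :
    Integrable (fun z => ‖fderiv ℝ f z‖ ^ 2) := by
  have h1 : Continuous (fderiv ℝ f) := hf.continuous_fderiv (by simp)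
  apply Continuous.integrable_of_hasCompactSupport (by fun_prop)
  exact (hc.fderiv (𝕜 := ℝ)).comp_left (g := fun v => ‖v‖ ^ 2) (by simp)

lemma hcs_of_zero {m : ℕ} {f : EuclideanSpace ℝ (Fin m) → ℝ} {R : ℝ}
    (h : ∀ z, R ≤ ‖z‖ → f z = 0) : HasCompactSupport f := by
  apply HasCompactSupport.intro (isCompact_closedBall (0 : EuclideanSpace ℝ (Fin m)) R)
  intro z hz
  apply h
  simp at hz
  exact hz.le

/-- Dyadic superposition of bumps. -/
lemma exists_tower {m : ℕ} (hm : 2 ≤ m) {R : ℝ} (hR : 0 < R) :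
    ∃ E : ℝ, ∀ n : ℕ, ∃ S : EuclideanSpace ℝ (Fin m) → ℝ, ContDiff ℝ (⊤ : ℕ∞) S ∧
      S 0 = n ∧ (∀ z, 0 ≤ S z) ∧ (∀ z, R ≤ ‖z‖ → S z = 0) ∧
      ∫ z, ‖fderiv ℝ S z‖ ^ 2 ≤ n * E := by
  let φ : ContDiffBump (0 : EuclideanSpace ℝ (Fin m)) := ⟨R / 2, R, by positivity, by linarith⟩
  have φs : ContDiff ℝ (⊤ : ℕ∞) φ := φ.contDiff
  have φz : ∀ z, R ≤ ‖z‖ → φ z = 0 := fun z hz => φ.zero_of_le_dist (by simpa using hz)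
  have φd : ∀ z, ‖z‖ ≤ R / 2 → fderiv ℝ φ z = 0 := by
    intro z hz
    apply IsLocalMax.fderiv_eq_zero
    have : φ z = 1 := φ.one_of_mem_closedBall (by simpa using hz)
    exact Filter.Eventually.of_forall fun w => by rw [this]; exact φ.le_one
  have φi := integrable_energy φ φs (hcs_of_zero φz)
  refine ⟨∫ z, ‖fderiv ℝ φ z‖ ^ 2, fun n => ?_⟩
  induction n with
  | zero => exact ⟨fun _ => 0, contDiff_const, by simp, by simp, by simp, by simp⟩
  | succ n ih =>
    obtain ⟨S, Ss, S0, Sp, Sz, SE⟩ := ih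
    have Si := integrable_energy S Ss (hcs_of_zero Sz)
    have Sd : ∀ z, R ≤ ‖z‖ → fderiv ℝ S z = 0 := by
      intro z hz
      apply IsLocalMin.fderiv_eq_zero
      exact Filter.Eventually.of_forall fun w => by rw [Sz z hz]; exact Sp w
    have key : ∀ z, fderiv ℝ (fun z => φ z + S ((2 : ℝ) • z)) z
        = fderiv ℝ φ z + (2 : ℝ) • fderiv ℝ S ((2 : ℝ) • z) := by
      intro z
      have h1 : HasFDerivAt φ (fderiv ℝ φ z) z :=
        (φs.differentiable (by simp) z).hasFDerivAt
      have h2 : HasFDerivAt S (fderiv ℝ S ((2 : ℝ) • z)) ((2 : ℝ) • z) :=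
        (Ss.differentiable (by simp) _).hasFDerivAt
      have h3 : HasFDerivAt (fun z : EuclideanSpace ℝ (Fin m) => (2 : ℝ) • z)
        ((2 : ℝ) • ContinuousLinearMap.id ℝ _) z := 
        ((2 : ℝ) • ContinuousLinearMap.id ℝ (EuclideanSpace ℝ (Fin m))).hasFDerivAt
      have h4 := (h1.add (h2.comp z h3)).fderiv
      refine h4.trans ?_
      ext v
      simp
    have key2 : ∀ z, ‖fderiv ℝ (fun z => φ z + S ((2 : ℝ) • z)) z‖ ^ 2
        = ‖fderiv ℝ φ z‖ ^ 2 + 4 * ‖fderiv ℝ S ((2 : ℝ) • z)‖ ^ 2 := by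
      intro z
      rw [key]
      rcases le_total ‖z‖ (R / 2) with h | h
      · rw [φd z h]
        simp [norm_smul, mul_pow]
        norm_num
      · rw [Sd ((2 : ℝ) • z) (by rw [norm_smul]; norm_num; linarith)]
        simp
    refine ⟨fun z => φ z + S ((2 : ℝ) • z), ?_, ?_, ?_, ?_, ?_⟩
    · exact φs.add (Ss.comp (contDiff_const_smul _))
    · have : φ 0 = 1 := φ.one_of_mem_closedBall (by simp; positivity)
      simp [S0, this, add_comm]
    · intro z
      exact add_nonneg φ.nonneg (Sp _)
    · intro z hz
      simp only
      rw [φz z hz, Sz _ (by rw [norm_smul]; norm_num; linarith)]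
      simp
    · simp_rw [key2]
      rw [integral_add φi ((Si.comp_smul (two_ne_zero)).const_mul 4), integral_const_mul,
        Measure.integral_comp_smul volume (fun z => ‖fderiv ℝ S z‖ ^ 2) (2 : ℝ)]
      have hnn : 0 ≤ ∫ z, ‖fderiv ℝ S z‖ ^ 2 := integral_nonneg fun _ => by positivity
      have hp : 4 * |((2 : ℝ) ^ m)⁻¹| ≤ 1 := by
        rw [abs_of_pos (by positivity), ← div_eq_mul_inv, div_le_one (by positivity)]
        calc (4 : ℝ) = 2 ^ 2 := by norm_num
          _ ≤ 2 ^ m := pow_le_pow_right₀ (by norm_num) hm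
      simp only [finrank_euclideanSpace, Fintype.card_fin, smul_eq_mul]
      push_cast
      nlinarith [mul_le_mul_of_nonneg_right hp hnn]

/-- Spikes of small energy. -/
lemma exists_spike {m : ℕ} (hm : 2 ≤ m) {R : ℝ} (hR : 0 < R) {ε : ℝ} (hε : 0 < ε) :
    ∃ g : EuclideanSpace ℝ (Fin m) → ℝ, ContDiff ℝ (⊤ : ℕ∞) g ∧
      g 0 = 1 ∧ (∀ z, R ≤ ‖z‖ → g z = 0) ∧ ∫ z, ‖fderiv ℝ g z‖ ^ 2 < ε := by
  obtain ⟨E, h⟩ := exists_tower hm hR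
  obtain ⟨n, hn⟩ := exists_nat_gt (max 0 (E / ε))
  have hn0 : (0 : ℝ) < n := (le_max_left _ _).trans_lt hn
  have hnE : E < n * ε := by
    have := (le_max_right _ _).trans_lt hn
    rwa [div_lt_iff₀ hε] at this
  obtain ⟨S, Ss, S0, Sp, Sz, SE⟩ := h n
  refine ⟨fun z => (n : ℝ)⁻¹ * S z, contDiff_const.mul Ss, ?_, ?_, ?_⟩
  · simp [S0, hn0.ne']
  · intro z hz
    simp [Sz z hz]
  · have : ∀ z, ‖fderiv ℝ (fun z => (n : ℝ)⁻¹ * S z) z‖ ^ 2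
        = ((n : ℝ)⁻¹) ^ 2 * ‖fderiv ℝ S z‖ ^ 2 := by
      intro z
      rw [fderiv_const_mul (Ss.differentiable (by simp) z), norm_smul, mul_pow]
      simp
    simp_rw [this]
    rw [integral_const_mul]
    calc _ ≤ ((n : ℝ)⁻¹) ^ 2 * (n * E) := by gcongr
      _ = E / n := by field_simp
      _ < ε := by rw [div_lt_iff₀ hn0]; linarith

lemma exists_sep {m l : ℕ} (x : Fin l → EuclideanSpace ℝ (Fin m)) (hx : Function.Injective x) :
    ∃ R : ℝ, 0 < R ∧ ∀ i j, i ≠ j → R ≤ ‖x j - x i‖ := by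
  have : ∀ᶠ R : ℝ in nhdsWithin 0 (Set.Ioi 0), ∀ i j, i ≠ j → R ≤ ‖x j - x i‖ := by
    rw [Filter.eventually_all]; intro i
    rw [Filter.eventually_all]; intro j
    by_cases hij : i = j
    · simp [hij]
    · have : 0 < ‖x j - x i‖ := by
        rw [norm_pos_iff, sub_ne_zero]
        exact fun h => hij (hx h.symm)
      filter_upwards [nhdsWithin_le_nhds (Iic_mem_nhds this)] with R hR _ using hR
  obtain ⟨R, h1, h2⟩ := (this.and self_mem_nhdsWithin).exists
  exact ⟨R, h2, h1⟩

lemma exists_interp {m : ℕ} (hm : 2 ≤ m) (l : ℕ) (x : Fin l → EuclideanSpace ℝ (Fin m))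
    (hx : Function.Injective x) (y : Fin l → ℝ) (δ : ℝ) (hδ : 0 < δ) :
    ∃ f : EuclideanSpace ℝ (Fin m) → ℝ,
        ContDiff ℝ (⊤ : ℕ∞) f ∧ HasCompactSupport f ∧ (∀ i, f (x i) = y i) ∧
          ∫ z, ‖gradient f z‖ ^ 2 < δ := by
  obtain ⟨R, hR, hsep⟩ := exists_sep x hx
  set C : ℝ := l * ∑ i, (y i) ^ 2 with hC
  have hC0 : 0 ≤ C := by positivity
  obtain ⟨g, gs, g0, gz, gE⟩ := exists_spike hm hR (ε := δ / (C + 1)) (by positivity)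
  have gc := hcs_of_zero gz
  have gi := integrable_energy g gs gc
  have gts : ∀ i, ContDiff ℝ (⊤ : ℕ∞) (fun z => g (z - x i)) := fun i =>
    gs.comp (contDiff_id.sub contDiff_const)
  have fs : ContDiff ℝ (⊤ : ℕ∞) (fun z => ∑ i, y i * g (z - x i)) :=
    ContDiff.sum fun i _ => contDiff_const.mul (gts i)
  have fc : HasCompactSupport (fun z => ∑ i, y i * g (z - x i)) := by
    apply hcs_of_zero (R := R + ∑ i, ‖x i‖)
    intro z hz
    apply Finset.sum_eq_zero
    intro i _
    have h1 : ‖x i‖ ≤ ∑ i, ‖x i‖ :=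
      Finset.single_le_sum (f := fun i => ‖x i‖) (fun _ _ => norm_nonneg _) (Finset.mem_univ i)
    have h2 := norm_sub_norm_le z (x i)
    rw [gz _ (by linarith), mul_zero]
  refine ⟨fun z => ∑ i, y i * g (z - x i), fs, fc, ?_, ?_⟩
  · intro j
    simp only
    rw [Finset.sum_eq_single j]
    · simp [g0]
    · intro i _ hij
      rw [gz _ (hsep i j hij), mul_zero]
    · simp
  · simp_rw [norm_gradient_eq']
    have hb : ∀ z, ‖fderiv ℝ (fun z => ∑ i, y i * g (z - x i)) z‖ ^ 2
        ≤ l * ∑ i, (y i) ^ 2 * ‖fderiv ℝ g (z - x i)‖ ^ 2 := by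
      intro z
      have e : fderiv ℝ (fun z => ∑ i, y i * g (z - x i)) z
          = ∑ i, y i • fderiv ℝ g (z - x i) := by
        rw [fderiv_fun_sum fun i _ => ((gts i).differentiable (by simp) z).const_mul (y i)]
        refine Finset.sum_congr rfl fun i _ => ?_
        rw [fderiv_const_mul ((gts i).differentiable (by simp) z), fderiv_comp_sub]
      rw [e]
      calc _ ≤ (∑ i, ‖y i • fderiv ℝ g (z - x i)‖) ^ 2 := by
            gcongr
            exact norm_sum_le _ _
        _ ≤ (Finset.univ : Finset (Fin l)).card * ∑ i, ‖y i • fderiv ℝ g (z - x i)‖ ^ 2 :=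
            sq_sum_le_card_mul_sum_sq
        _ = _ := by simp [norm_smul, mul_pow]
    have hi : ∀ i, Integrable fun z => (y i) ^ 2 * ‖fderiv ℝ g (z - x i)‖ ^ 2 := fun i =>
      (gi.comp_sub_right (x i)).const_mul _
    calc _ ≤ ∫ z, l * ∑ i, (y i) ^ 2 * ‖fderiv ℝ g (z - x i)‖ ^ 2 := by
          apply integral_mono (integrable_energy _ fs fc)
            ((integrable_finsetSum _ fun i _ => hi i).const_mul _) hb
      _ = C * ∫ z, ‖fderiv ℝ g z‖ ^ 2 := by
          rw [integral_const_mul, integral_finsetSum _ fun i _ => hi i, hC, mul_assoc,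
            Finset.sum_mul]
          congr 1
          refine Finset.sum_congr rfl fun i _ => ?_
          rw [integral_const_mul, integral_sub_right_eq_self (fun z => ‖fderiv ℝ g z‖ ^ 2)]
      _ ≤ C * (δ / (C + 1)) := by gcongr
      _ < δ := by
          rw [mul_div_assoc', div_lt_iff₀ (by positivity)]
          nlinarith

/-- degeneracy of first-order regularization for `m ≥ 2`: any labels at
pairwise distinct points can be interpolated by smooth compactly supported functions of
arbitrarily small Dirichlet energy, so for every `λ > 0` the infimum of the regularized
risk over smooth compactly supported functions is `0`. -/
theorem first_order_regularized_risk_degenerate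
    (m : ℕ) (hm : 2 ≤ m) (l : ℕ) (x : Fin l → EuclideanSpace ℝ (Fin m))
    (hx : Function.Injective x) (y : Fin l → ℝ) :
    (∀ δ : ℝ, 0 < δ → ∃ f : EuclideanSpace ℝ (Fin m) → ℝ,
        ContDiff ℝ (⊤ : ℕ∞) f ∧ HasCompactSupport f ∧ (∀ i, f (x i) = y i) ∧
          ∫ z, ‖gradient f z‖ ^ 2 < δ) ∧
      ∀ lam : ℝ, 0 < lam →
        sInf {R : ℝ | ∃ f : EuclideanSpace ℝ (Fin m) → ℝ,
            ContDiff ℝ (⊤ : ℕ∞) f ∧ HasCompactSupport f ∧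
              R = ∑ i, (y i - f (x i)) ^ 2 + lam * ∫ z, ‖gradient f z‖ ^ 2} = 0 := by
  refine ⟨fun δ hδ => exists_interp hm l x hx y δ hδ, fun lam hlam => ?_⟩
  have hnn : ∀ R ∈ {R : ℝ | ∃ f : EuclideanSpace ℝ (Fin m) → ℝ,
            ContDiff ℝ (⊤ : ℕ∞) f ∧ HasCompactSupport f ∧
              R = ∑ i, (y i - f (x i)) ^ 2 + lam * ∫ z, ‖gradient f z‖ ^ 2}, 0 ≤ R := by
    rintro R ⟨f, -, -, rfl⟩
    have : 0 ≤ ∫ z, ‖gradient f z‖ ^ 2 := integral_nonneg fun _ => by positivity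
    positivity
  apply le_antisymm _ (Real.sInf_nonneg hnn)
  apply le_of_forall_pos_le_add
  intro ε hε
  obtain ⟨f, fs, fc, fi, fE⟩ := exists_interp hm l x hx y (ε / lam) (by positivity)
  refine (csInf_le ⟨0, hnn⟩ ⟨f, fs, fc, rfl⟩).trans ?_
  rw [lt_div_iff₀ hlam] at fE
  simp only [fi, sub_self]
  simp
  linarith
end
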